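/- For every n ≥ 1, the number of one-row descending plane partitions of order n with no special part equals the number of permutations of {1,…,n} with exactly one ascent. -/

import Mathlib

/-- A one-row descending plane partition of order `n` with no special part:
a weakly decreasing list of integers in `{1,…,n}` whose first entry exceeds its length
and whose `k`-th entry (1-indexed) is at least `k`. -/
def OneRowDPP (n : ℕ) (a : List ℕ) : Prop :=
  a.Chain' (· ≥ ·) ∧ (∀ x ∈ a, 1 ≤ x ∧ x ≤ n) ∧ a.length < a.getD 0 0 ∧
  ∀ p < a.length, p < a.getD p 0

/-- The number of ascents of a word `l`: positions `k` (0-indexed) with `l_k < l_{k+1}`. -/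
def numAscents (l : List ℕ) : ℕ :=
  ((List.range (l.length - 1)).filter fun k => decide (l.getD k 0 < l.getD (k + 1) 0)).length

/-!
Both families are in bijection with the subsets `s` of `{1,…,n}` that are not initial segments,
i.e. that contain an element larger than some missing one. Writing the complement of `s` and then
`s`, each in decreasing order, gives a permutation whose only possible ascent is at the junction,
and there is one exactly when `s` is not initial. Writing `s` in decreasing order and adding `k` to
its `k`-th entry (0-indexed) gives a weakly decreasing sequence with the same first entry and the
same length; the first entry exceeds the length when `max s` exceeds the cardinality of `s`, which
again says that `s` is not initial.
-/

open Finset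

theorem numAscents_singleton (a : ℕ) : numAscents [a] = 0 := rfl

theorem numAscents_cons_cons (a b : ℕ) (l : List ℕ) :
    numAscents (a :: b :: l) = (if a < b then 1 else 0) + numAscents (b :: l) := by
  simp only [numAscents, List.length_cons, Nat.add_sub_cancel, List.range_succ_eq_map,
    List.filter_cons, List.filter_map]
  by_cases h : a < b <;> simp [h, Function.comp_def, Nat.add_comm]

theorem numAscents_append_cons_cons (u v : List ℕ) (a b : ℕ) :
    numAscents (u ++ a :: b :: v) =
      numAscents (u ++ [a]) + (if a < b then 1 else 0) + numAscents (b :: v) := by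
  induction u with
  | nil =>
    simp only [List.nil_append, numAscents_cons_cons, numAscents_singleton, Nat.zero_add]
  | cons c u ih =>
    cases u with
    | nil =>
      simp only [List.cons_append, List.nil_append, numAscents_cons_cons, numAscents_singleton,
        Nat.add_zero, Nat.add_assoc]
    | cons d u =>
      simp only [List.cons_append, numAscents_cons_cons c d] at ih ⊢
      rw [ih, ← Nat.add_assoc, ← Nat.add_assoc]

theorem numAscents_eq_zero_iff_sortedGE (l : List ℕ) : numAscents l = 0 ↔ l.SortedGE := by
  rw [List.sortedGE_iff_isChain]
  induction l with
  | nil => simp [numAscents]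
  | cons a l ih =>
    cases l with
    | nil => simp [numAscents]
    | cons b l =>
      rw [numAscents_cons_cons, List.isChain_cons_cons, ← ih]
      split_ifs <;> omega

theorem numAscents_append_eq_one {u v : List ℕ} (hu : u.SortedGE) (hv : v.SortedGE)
    (huv : ∃ y ∈ u, ∃ x ∈ v, y < x) : numAscents (u ++ v) = 1 := by
  obtain ⟨y, hy, x, hx, hyx⟩ := huv
  obtain ⟨u, a, rfl⟩ := List.eq_nil_or_concat' u |>.resolve_left (List.ne_nil_of_mem hy)
  obtain ⟨b, v, rfl⟩ := List.exists_cons_of_ne_nil (List.ne_nil_of_mem hx)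
  have hay : a ≤ y := by simpa using hu.pairwise.rel_getLast hy
  have hxb : x ≤ b := hv.pairwise.rel_head hx
  rw [List.append_assoc, List.singleton_append, numAscents_append_cons_cons,
    if_pos (hay.trans_lt (hyx.trans_le hxb)), (numAscents_eq_zero_iff_sortedGE _).2 hu,
    (numAscents_eq_zero_iff_sortedGE _).2 hv]

theorem exists_append_of_numAscents_eq_one {l : List ℕ} (hl : numAscents l = 1) :
    ∃ u v, l = u ++ v ∧ u.SortedGE ∧ v.SortedGE ∧ ∃ y ∈ u, ∃ x ∈ v, y < x := by
  have hnot : ¬ l.IsChain (· ≥ ·) := by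
    rw [← List.sortedGE_iff_isChain, ← numAscents_eq_zero_iff_sortedGE, hl]
    exact one_ne_zero
  rw [List.isChain_iff_forall_rel_of_append_cons_cons] at hnot
  push Not at hnot
  obtain ⟨a, b, u, v, rfl, hab⟩ := hnot
  rw [numAscents_append_cons_cons, if_pos hab] at hl
  exact ⟨u ++ [a], b :: v, by simp, (numAscents_eq_zero_iff_sortedGE _).1 (by omega),
    (numAscents_eq_zero_iff_sortedGE _).1 (by omega), a, by simp, b, by simp, hab⟩

section DescendingRuns

variable {α : Type*} [LinearOrder α]

/-- The subsets of `t` that are not initial segments of `t`, given by a witness: an element `x` of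
the subset together with a smaller element `y` of `t` outside it. -/
def nonInitialSubsets (t : Finset α) : Set (Finset α) :=
  {s | s ⊆ t ∧ ∃ y ∈ t \ s, ∃ x ∈ s, y < x}

/-- The elements of `t \ s` in decreasing order followed by those of `s` in decreasing order: for
`s ⊆ t`, the arrangement of `t` into two descending runs with `s` as second run. -/
def descendingRuns (t s : Finset α) : List α :=
  (t \ s).sort (· ≥ ·) ++ s.sort (· ≥ ·)

theorem descendingRuns_perm {w : List α} (hw : w.Nodup) {s : Finset α} (hs : s ⊆ w.toFinset) :
    (descendingRuns w.toFinset s).Perm w := by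
  have hnodup : (descendingRuns w.toFinset s).Nodup :=
    (sort_nodup _ _).append (sort_nodup _ _) fun _ hx hx' ↦
      (mem_sdiff.1 ((mem_sort _).1 hx)).2 ((mem_sort _).1 hx')
  refine List.perm_of_nodup_nodup_toFinset_eq hnodup hw ?_
  rw [descendingRuns, List.toFinset_append, sort_toFinset, sort_toFinset, sdiff_union_of_subset hs]

theorem eq_descendingRuns_of_append_perm {w u v : List α} (hw : w.Nodup) (h : (u ++ v).Perm w)
    (hu : u.SortedGE) (hv : v.SortedGE) : u ++ v = descendingRuns w.toFinset v.toFinset := by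
  obtain ⟨hu', hv', hdisj⟩ := List.nodup_append'.1 (h.nodup_iff.2 hw)
  have hdiff : w.toFinset \ v.toFinset = u.toFinset := by
    rw [← List.toFinset_eq_of_perm _ _ h, List.toFinset_append, union_sdiff_right,
      sdiff_eq_self_of_disjoint (List.disjoint_toFinset_iff_disjoint.2 hdisj)]
  rw [descendingRuns, hdiff, (List.toFinset_sort _ hu').2 hu.pairwise,
    (List.toFinset_sort _ hv').2 hv.pairwise]

theorem eq_nil_of_sortedGE_append {u d v : List α} (hud : (u ++ d).SortedGE)
    (hdv : (d ++ v).SortedGE) (h : ∃ y ∈ u, ∃ x ∈ d ++ v, y < x) : d = [] := by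
  obtain ⟨y, hy, x, hx, hyx⟩ := h
  by_contra hd
  obtain ⟨e, d, rfl⟩ := List.exists_cons_of_ne_nil hd
  have hey : e ≤ y := (List.pairwise_append.1 hud.pairwise).2.2 y hy e List.mem_cons_self
  have hxe : x ≤ e := hdv.pairwise.rel_head hx
  exact (hxe.trans hey).not_gt hyx

theorem right_eq_of_append_eq_of_sortedGE {u v u' v' : List α} (hu : u.SortedGE) (hv : v.SortedGE)
    (hu' : u'.SortedGE) (hv' : v'.SortedGE) (huv : ∃ y ∈ u, ∃ x ∈ v, y < x)
    (huv' : ∃ y ∈ u', ∃ x ∈ v', y < x) (h : u ++ v = u' ++ v') : v = v' := by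
  obtain ⟨d, rfl, rfl⟩ | ⟨d, rfl, rfl⟩ := List.append_eq_append_iff.1 h
  · rw [eq_nil_of_sortedGE_append hu' hv huv, List.nil_append]
  · rw [eq_nil_of_sortedGE_append hu hv' huv', List.nil_append]

theorem injOn_descendingRuns (t : Finset α) :
    Set.InjOn (descendingRuns t) (nonInitialSubsets t) := by
  rintro s ⟨-, hs⟩ s' ⟨-, hs'⟩ h
  have hsort : s.sort (· ≥ ·) = s'.sort (· ≥ ·) :=
    right_eq_of_append_eq_of_sortedGE (sortedGT_sort _).sortedGE (sortedGT_sort _).sortedGE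
      (sortedGT_sort _).sortedGE (sortedGT_sort _).sortedGE (by simpa only [mem_sort] using hs)
      (by simpa only [mem_sort] using hs') h
  simpa only [sort_toFinset] using congrArg List.toFinset hsort

end DescendingRuns

theorem bijOn_descendingRuns {w : List ℕ} (hw : w.Nodup) :
    Set.BijOn (descendingRuns w.toFinset) (nonInitialSubsets w.toFinset)
      {l | l.Perm w ∧ numAscents l = 1} := by
  refine ⟨?mapsTo, injOn_descendingRuns _, ?surjOn⟩
  case mapsTo =>
    rintro s ⟨hs, hgap⟩
    exact ⟨descendingRuns_perm hw hs, numAscents_append_eq_one (sortedGT_sort _).sortedGE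
      (sortedGT_sort _).sortedGE (by simpa only [mem_sort] using hgap)⟩
  case surjOn =>
    rintro l ⟨hl, hasc⟩
    obtain ⟨u, v, rfl, hu, hv, y, hy, x, hx, hyx⟩ := exists_append_of_numAscents_eq_one hasc
    have hdisj := List.disjoint_of_nodup_append (hl.nodup_iff.2 hw)
    refine ⟨v.toFinset, ⟨fun z hz ↦ ?_, y, ?_, x, List.mem_toFinset.2 hx, hyx⟩,
      (eq_descendingRuns_of_append_perm hw hl hu hv).symm⟩
    · simpa [← hl.mem_iff] using Or.inr (List.mem_toFinset.1 hz)
    · simpa [← hl.mem_iff, hy] using hdisj hy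

theorem exists_card_lt_iff_mem_nonInitialSubsets {n : ℕ} {s : Finset ℕ} (hs : s ⊆ Icc 1 n) :
    (∃ x ∈ s, #s < x) ↔ s ∈ nonInitialSubsets (Icc 1 n) := by
  constructor
  · rintro ⟨x, hx, hlt⟩
    have hnot : ¬ Icc 1 x ⊆ s := fun h ↦ by simpa using hlt.trans_le' (card_le_card h)
    obtain ⟨y, hy, hys⟩ := not_subset.1 hnot
    have hyx : y < x := (mem_Icc.1 hy).2.lt_of_ne fun h ↦ hys (h ▸ hx)
    have hyn : y ∈ Icc 1 n := Icc_subset_Icc_right (mem_Icc.1 (hs hx)).2 hy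
    exact ⟨hs, y, mem_sdiff.2 ⟨hyn, hys⟩, x, hx, hyx⟩
  · rintro ⟨-, y, hy, x, hx, hyx⟩
    by_contra! hle
    have hsub : s ⊆ Icc 1 #s := fun z hz ↦ mem_Icc.2 ⟨(mem_Icc.1 (hs hz)).1, hle z hz⟩
    have heq : s = Icc 1 #s := eq_of_subset_of_card_le hsub (by simp)
    obtain ⟨hyn, hys⟩ := mem_sdiff.1 hy
    exact hys (heq ▸ mem_Icc.2 ⟨(mem_Icc.1 hyn).1, hyx.le.trans (hle x hx)⟩)

/-- The list with `i` added to its `i`-th entry (0-indexed), which turns strictly decreasing lists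
into the weakly decreasing ones whose `i`-th entry is at least `i`. -/
def addIndex (b : List ℕ) : List ℕ := b.mapIdx fun i x ↦ x + i

theorem length_addIndex (b : List ℕ) : (addIndex b).length = b.length := List.length_mapIdx

theorem getElem_addIndex (b : List ℕ) (i : ℕ) (hi : i < (addIndex b).length) :
    (addIndex b)[i] = b[i]'(length_addIndex b ▸ hi) + i := List.getElem_mapIdx

theorem addIndex_injective : Function.Injective addIndex := by
  intro b c h
  have hlen : b.length = c.length := by simpa only [length_addIndex] using congrArg List.length h
  refine List.ext_getElem hlen fun i hb hc ↦ ?_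
  have hi : (addIndex b)[i]'(by rwa [length_addIndex]) =
      (addIndex c)[i]'(by rwa [length_addIndex]) := by simp only [h]
  simpa only [getElem_addIndex, Nat.add_right_cancel_iff] using hi

theorem exists_addIndex_eq {a : List ℕ} (ha : ∀ i (hi : i < a.length), i ≤ a[i]) :
    ∃ b, addIndex b = a := by
  refine ⟨a.mapIdx fun i x ↦ x - i, List.ext_getElem (by simp [length_addIndex]) fun i _ hi ↦ ?_⟩
  rw [getElem_addIndex, List.getElem_mapIdx, Nat.sub_add_cancel (ha i hi)]

theorem sortedGE_addIndex_iff {b : List ℕ} : (addIndex b).SortedGE ↔ b.SortedGT := by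
  simp only [List.sortedGE_iff_isChain, List.sortedGT_iff_isChain, List.isChain_iff_getElem,
    getElem_addIndex, length_addIndex]
  refine forall₂_congr fun i hi ↦ ?_
  omega

theorem getElem_add_le_getElem_zero {b : List ℕ} (hb : b.SortedGT) {i : ℕ} (hi : i < b.length) :
    b[i] + i ≤ b[0] := by
  have hi' : i < (addIndex b).length := by rwa [length_addIndex]
  have hle := (sortedGE_addIndex_iff.2 hb).getElem_ge_getElem_of_le (hi := hi')
    (hj := i.zero_le.trans_lt hi') i.zero_le
  simpa only [getElem_addIndex, Nat.add_zero] using hle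

theorem exists_mem_lt_iff_lt_getD_zero {b : List ℕ} (hb : b.SortedGE) (k : ℕ) :
    (∃ x ∈ b, k < x) ↔ k < b.getD 0 0 := by
  cases b with
  | nil => simp
  | cons a b =>
    exact ⟨fun ⟨x, hx, hkx⟩ ↦ hkx.trans_le (hb.pairwise.rel_head hx),
      fun hk ↦ ⟨a, List.mem_cons_self, hk⟩⟩

theorem forall_mem_addIndex_bounds_iff {n : ℕ} {b : List ℕ} (hb : b.SortedGT) :
    ((∀ x ∈ addIndex b, 1 ≤ x ∧ x ≤ n) ∧
      ∀ p < (addIndex b).length, p < (addIndex b).getD p 0) ↔ ∀ x ∈ b, x ∈ Icc 1 n := by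
  have hget (i : ℕ) (hi : i < b.length) : (addIndex b).getD i 0 = b[i] + i := by
    simp [addIndex, hi]
  simp only [List.forall_mem_iff_getElem, getElem_addIndex, length_addIndex, mem_Icc]
  constructor
  · rintro ⟨hle, hlt⟩ i hi
    have := hle i hi
    have := hget i hi ▸ hlt i hi
    omega
  · intro h
    refine ⟨fun i hi ↦ ?_, fun i hi ↦ ?_⟩
    · have := getElem_add_le_getElem_zero hb hi
      have := h 0 (i.zero_le.trans_lt hi)
      have := h i hi
      omega
    · have := h i hi
      rw [hget i hi]
      omega

theorem oneRowDPP_addIndex_iff {n : ℕ} {b : List ℕ} :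
    OneRowDPP n (addIndex b) ↔
      b.SortedGT ∧ (∀ x ∈ b, x ∈ Icc 1 n) ∧ ∃ x ∈ b, b.length < x := by
  have hhead : (addIndex b).getD 0 0 = b.getD 0 0 := by cases b <;> simp [addIndex]
  change (addIndex b).IsChain (· ≥ ·) ∧ _ ↔ _
  rw [← List.sortedGE_iff_isChain, sortedGE_addIndex_iff, hhead, length_addIndex]
  refine and_congr_right fun hb ↦ ?_
  rw [exists_mem_lt_iff_lt_getD_zero hb.sortedGE, ← forall_mem_addIndex_bounds_iff hb,
    length_addIndex]
  tauto

theorem bijOn_addIndex_sort (n : ℕ) :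
    Set.BijOn (fun s : Finset ℕ ↦ addIndex (s.sort (· ≥ ·))) (nonInitialSubsets (Icc 1 n))
      {a | OneRowDPP n a} := by
  refine ⟨?mapsTo, ?injOn, ?surjOn⟩
  case mapsTo =>
    intro s hs
    refine oneRowDPP_addIndex_iff.2 ⟨sortedGT_sort s, fun x hx ↦ hs.1 ((mem_sort _).1 hx), ?_⟩
    simpa only [mem_sort, length_sort] using (exists_card_lt_iff_mem_nonInitialSubsets hs.1).2 hs
  case injOn =>
    intro s _ s' _ h
    simpa only [sort_toFinset] using congrArg List.toFinset (addIndex_injective h)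
  case surjOn =>
    intro a ha
    obtain ⟨b, rfl⟩ := exists_addIndex_eq fun i hi ↦
      (List.getD_eq_getElem a 0 hi ▸ ha.2.2.2 i hi).le
    obtain ⟨hb, hmem, hlt⟩ := oneRowDPP_addIndex_iff.1 ha
    have hsub : b.toFinset ⊆ Icc 1 n := fun x hx ↦ hmem x (List.mem_toFinset.1 hx)
    refine ⟨b.toFinset, (exists_card_lt_iff_mem_nonInitialSubsets hsub).1 ?_, ?_⟩
    · simpa only [List.toFinset_card_of_nodup hb.nodup, List.mem_toFinset] using hlt
    · exact congrArg addIndex ((List.toFinset_sort _ hb.nodup).2 hb.sortedGE.pairwise)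

/-- The number of one-row descending plane partitions of order `n` with no special part
equals the number of permutations of `{1,…,n}` (as words) with exactly one ascent. -/
theorem oneRowDPP_card_eq_oneAscent_card (n : ℕ) (hn : 1 ≤ n) :
    {a : List ℕ | OneRowDPP n a}.ncard =
      {l : List ℕ | l.Perm (List.range' 1 n) ∧ numAscents l = 1}.ncard := by
  have hword := bijOn_descendingRuns (List.nodup_range' (s := 1) (n := n))
  rw [List.toFinset_range'_1_1] at hword
  exact (bijOn_addIndex_sort n).ncard_eq.symm.trans hword.ncard_eq
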